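/- arXiv:1409.2908 — 2 statements merged into one kernel-verified Lean document; each statement's English description precedes it below -/
import Mathlib

section
/- Let R be a commutative ring and let k be a natural number. Define the recursive Strassen multiplication function strassen on 2^k × 2^k matrices over R as follows: for k = 0 it is scalar multiplication, and for k ≥ 1 it partitions each matrix into four 2^(k-1) × 2^(k-1) blocks, forms S1 = A11 + A22, S2 = A21 + A22, S3 = A11, S4 = A22, S5 = A11 + A12, S6 = A21 - A11, S7 = A12 - A22 and T1 = B11 + B22, T2 = B11, T3 = B12 - B22, T4 = B21 - B11, T5 = B22, T6 = B11 + B12, T7 = B21 + B22, recursively computes M_r = strassen(S_r, T_r) for 1 ≤ r ≤ 7, and returns the block matrix with blocks C11 = M1 + M4 - M5 + M7, C12 = M3 + M5, C21 = M2 + M4, C22 = M1 - M2 + M3 + M6. Then for all 2^k × 2^k matrices A and B over R, strassen(A, B) = A * B. -/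
/-- The `(p, q)` block (for `p, q : Fin 2`) of a `2^(k+1) × 2^(k+1)` matrix,
each block being of size `2^k × 2^k`. -/
def blk {α : Type*} {k : ℕ} (A : Matrix (Fin (2 ^ (k + 1))) (Fin (2 ^ (k + 1))) α)
    (p q : Fin 2) : Matrix (Fin (2 ^ k)) (Fin (2 ^ k)) α :=
  Matrix.of fun i j =>
    A ⟨(p : ℕ) * 2 ^ k + (i : ℕ), by
        have h2 : 2 ^ (k + 1) = 2 ^ k + 2 ^ k := by ring
        have hp : (p : ℕ) ≤ 1 := Nat.le_of_lt_succ p.isLt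
        have hp2 : (p : ℕ) * 2 ^ k ≤ 1 * 2 ^ k := Nat.mul_le_mul_right _ hp
        have hi := i.isLt
        omega⟩
      ⟨(q : ℕ) * 2 ^ k + (j : ℕ), by
        have h2 : 2 ^ (k + 1) = 2 ^ k + 2 ^ k := by ring
        have hq : (q : ℕ) ≤ 1 := Nat.le_of_lt_succ q.isLt
        have hq2 : (q : ℕ) * 2 ^ k ≤ 1 * 2 ^ k := Nat.mul_le_mul_right _ hq
        have hj := j.isLt
        omega⟩

/-- Assemble a `2^(k+1) × 2^(k+1)` matrix from its four `2^k × 2^k` blocks. -/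
def unblk {α : Type*} {k : ℕ} (C11 C12 C21 C22 : Matrix (Fin (2 ^ k)) (Fin (2 ^ k)) α) :
    Matrix (Fin (2 ^ (k + 1))) (Fin (2 ^ (k + 1))) α :=
  Matrix.of fun i j =>
    have h2 : 2 ^ (k + 1) = 2 ^ k + 2 ^ k := by ring
    if hi : (i : ℕ) < 2 ^ k then
      if hj : (j : ℕ) < 2 ^ k then C11 ⟨i, hi⟩ ⟨j, hj⟩
      else C12 ⟨i, hi⟩ ⟨(j : ℕ) - 2 ^ k, by have := j.isLt; omega⟩
    else
      if hj : (j : ℕ) < 2 ^ k then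
        C21 ⟨(i : ℕ) - 2 ^ k, by have := i.isLt; omega⟩ ⟨j, hj⟩
      else
        C22 ⟨(i : ℕ) - 2 ^ k, by have := i.isLt; omega⟩
          ⟨(j : ℕ) - 2 ^ k, by have := j.isLt; omega⟩

/-- Strassen's recursive fast matrix multiplication on `2^k × 2^k` matrices:
scalar multiplication in the base case `k = 0`, and for `k ≥ 1`, seven recursive
multiplications of linear combinations of the `2^(k-1) × 2^(k-1)` blocks. -/
def strassen {α : Type*} [CommRing α] :
    (k : ℕ) → Matrix (Fin (2 ^ k)) (Fin (2 ^ k)) α →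
      Matrix (Fin (2 ^ k)) (Fin (2 ^ k)) α → Matrix (Fin (2 ^ k)) (Fin (2 ^ k)) α
  | 0, A, B => Matrix.of fun _ _ => A 0 0 * B 0 0
  | (k + 1), A, B =>
    let A11 := blk A 0 0; let A12 := blk A 0 1
    let A21 := blk A 1 0; let A22 := blk A 1 1
    let B11 := blk B 0 0; let B12 := blk B 0 1
    let B21 := blk B 1 0; let B22 := blk B 1 1
    let M1 := strassen k (A11 + A22) (B11 + B22)
    let M2 := strassen k (A21 + A22) B11
    let M3 := strassen k A11 (B12 - B22)
    let M4 := strassen k A22 (B21 - B11)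
    let M5 := strassen k (A11 + A12) B22
    let M6 := strassen k (A21 - A11) (B11 + B12)
    let M7 := strassen k (A12 - A22) (B21 + B22)
    unblk (M1 + M4 - M5 + M7) (M3 + M5) (M2 + M4) (M1 - M2 + M3 + M6)

open Matrix

/-- The splitting of the indices of a `2^(k+1) × 2^(k+1)` matrix underlying `blk` and `unblk`: the
left summand is the first half of the indices, the right summand the second half. -/
def halvesEquiv (k : ℕ) : Fin (2 ^ k) ⊕ Fin (2 ^ k) ≃ Fin (2 ^ (k + 1)) :=
  finSumFinEquiv.trans (finCongr (Nat.two_pow_succ k).symm)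

theorem fromBlocks_blk {α : Type*} {k : ℕ}
    (A : Matrix (Fin (2 ^ (k + 1))) (Fin (2 ^ (k + 1))) α) :
    fromBlocks (blk A 0 0) (blk A 0 1) (blk A 1 0) (blk A 1 1) =
      A.submatrix (halvesEquiv k) (halvesEquiv k) := by
  ext (i | i) (j | j) <;> simp [blk, halvesEquiv, Fin.natAdd, Fin.cast]

theorem submatrix_unblk {α : Type*} {k : ℕ}
    (C11 C12 C21 C22 : Matrix (Fin (2 ^ k)) (Fin (2 ^ k)) α) :
    (unblk C11 C12 C21 C22).submatrix (halvesEquiv k) (halvesEquiv k) =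
      fromBlocks C11 C12 C21 C22 := by
  ext (i | i) (j | j) <;> simp [unblk, halvesEquiv]

theorem fromBlocks_mul_fromBlocks_strassen {l m n R : Type*} [Fintype m]
    [NonUnitalNonAssocRing R] (A11 A12 A21 A22 : Matrix l m R) (B11 B12 B21 B22 : Matrix m n R) :
    fromBlocks A11 A12 A21 A22 * fromBlocks B11 B12 B21 B22 =
      let M1 := (A11 + A22) * (B11 + B22)
      let M2 := (A21 + A22) * B11
      let M3 := A11 * (B12 - B22)
      let M4 := A22 * (B21 - B11)
      let M5 := (A11 + A12) * B22
      let M6 := (A21 - A11) * (B11 + B12)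
      let M7 := (A12 - A22) * (B21 + B22)
      fromBlocks (M1 + M4 - M5 + M7) (M3 + M5) (M2 + M4) (M1 - M2 + M3 + M6) := by
  rw [fromBlocks_multiply]
  congr 1 <;> simp only [Matrix.add_mul, Matrix.mul_add, Matrix.sub_mul, Matrix.mul_sub] <;> abel

theorem strassen_zero {α : Type*} [CommRing α] (A B : Matrix (Fin (2 ^ 0)) (Fin (2 ^ 0)) α) :
    strassen 0 A B = A * B := by
  ext i j
  obtain rfl : i = 0 := Fin.fin_one_eq_zero i
  obtain rfl : j = 0 := Fin.fin_one_eq_zero j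
  exact (Fin.sum_univ_one fun l : Fin 1 => A 0 l * B l 0).symm

/-- Strassen's recursive algorithm correctly multiplies `2^k × 2^k` matrices
over any commutative ring. -/
theorem strassen_correct {α : Type*} [CommRing α] (k : ℕ)
    (A B : Matrix (Fin (2 ^ k)) (Fin (2 ^ k)) α) :
    strassen k A B = A * B := by
  induction k with
  | zero => exact strassen_zero A B
  | succ k ih =>
    let e := halvesEquiv k
    apply (reindex e.symm e.symm).injective
    calc (strassen (k + 1) A B).submatrix e e
        = fromBlocks (blk A 0 0) (blk A 0 1) (blk A 1 0) (blk A 1 1) *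
            fromBlocks (blk B 0 0) (blk B 0 1) (blk B 1 0) (blk B 1 1) := by
          rw [fromBlocks_mul_fromBlocks_strassen]
          simp only [strassen, ih, e, submatrix_unblk]
      _ = A.submatrix e e * B.submatrix e e := by rw [fromBlocks_blk, fromBlocks_blk]
      _ = (A * B).submatrix e e := submatrix_mul_equiv A B e e e
end

section
/- Let T be the 4 × 4 × 4 matrix multiplication tensor for ⟨2,2,2⟩. Although T has 8 nonzero entries, its rank is at most 7: there exist real matrices U, V, W, each of size 4 × 7, such that T_{ijk} = Σ_{r=1}^7 U_{ir} V_{jr} W_{kr} for all 1 ≤ i, j, k ≤ 4. -/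
/-- The matrix multiplication tensor for ⟨M,K,N⟩, of size `MK × KN × MN`
(0-based indices, corresponding to 1-based indices `i, j, k` via `i-1, j-1, k-1`). -/
def mmTensor (M K N : ℕ) (i : Fin (M * K)) (j : Fin (K * N)) (k : Fin (M * N)) : ℝ :=
  if (i : ℕ) % K = (j : ℕ) / N ∧ (j : ℕ) % N = (k : ℕ) % N ∧
      (i : ℕ) / K = (k : ℕ) / N then 1 else 0

/-- Row-major vectorization of an `I × J` matrix. -/
def rvec {I J : ℕ} (A : Matrix (Fin I) (Fin J) ℝ) : Fin (I * J) → ℝ := fun a =>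
  A ⟨(a : ℕ) / J, by
      have h := a.isLt
      have hJ : 0 < J := Nat.pos_of_ne_zero fun h0 => by subst h0; simp at h
      exact (Nat.div_lt_iff_lt_mul hJ).mpr h⟩
    ⟨(a : ℕ) % J, by
      have h := a.isLt
      have hJ : 0 < J := Nat.pos_of_ne_zero fun h0 => by subst h0; simp at h
      exact Nat.mod_lt _ hJ⟩

/-!
A bilinear algorithm forms products of a linear form in the entries of `A` with a linear form in the
entries of `B`, and recovers `A * B` linearly from these products. The entries of the matrix
multiplication tensor are the entries of products of matrix units, so evaluating an algorithm with
`R` products on matrix units writes the tensor as a sum of `R` rank-one tensors. For `2 × 2`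
matrices, Strassen's algorithm needs only seven products.
-/

open Matrix

section MatrixMultiplicationTensor

variable {M K N : ℕ}

theorem divNat_finProdFinEquiv {m n : ℕ} (x : Fin m × Fin n) :
    (finProdFinEquiv x).divNat = x.1 :=
  congrArg Prod.fst (finProdFinEquiv.symm_apply_apply x)

theorem modNat_finProdFinEquiv {m n : ℕ} (x : Fin m × Fin n) :
    (finProdFinEquiv x).modNat = x.2 :=
  congrArg Prod.snd (finProdFinEquiv.symm_apply_apply x)

theorem mmTensor_finProdFinEquiv (x : Fin M × Fin K) (y : Fin K × Fin N) (z : Fin M × Fin N) :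
    mmTensor M K N (finProdFinEquiv x) (finProdFinEquiv y) (finProdFinEquiv z) =
      if x.2 = y.1 ∧ y.2 = z.2 ∧ x.1 = z.1 then 1 else 0 := by
  simp only [mmTensor, ← Fin.coe_divNat, ← Fin.coe_modNat, divNat_finProdFinEquiv,
    modNat_finProdFinEquiv, Fin.val_inj]

open Classical in
theorem card_filter_mmTensor_eq_one (M K N : ℕ) :
    (Finset.univ.filter fun p : Fin (M * K) × Fin (K * N) × Fin (M * N) =>
      mmTensor M K N p.1 p.2.1 p.2.2 = 1).card = M * K * N := by
  let entry (t : Fin M × Fin K × Fin N) : Fin (M * K) × Fin (K * N) × Fin (M * N) :=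
    (finProdFinEquiv (t.1, t.2.1), finProdFinEquiv (t.2.1, t.2.2), finProdFinEquiv (t.1, t.2.2))
  have entry_injective : Function.Injective entry := by
    rintro ⟨a, b, c⟩ ⟨a', b', c'⟩ h
    simp only [entry, Prod.mk.injEq, EmbeddingLike.apply_eq_iff_eq] at h
    simp only [h]
  have support_eq : (Finset.univ.filter fun p : Fin (M * K) × Fin (K * N) × Fin (M * N) =>
      mmTensor M K N p.1 p.2.1 p.2.2 = 1) = Finset.univ.image entry := by
    ext ⟨i, j, k⟩
    obtain ⟨⟨a, b⟩, rfl⟩ := finProdFinEquiv.surjective i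
    obtain ⟨⟨b', c⟩, rfl⟩ := finProdFinEquiv.surjective j
    obtain ⟨⟨a', c'⟩, rfl⟩ := finProdFinEquiv.surjective k
    simp only [entry, Finset.mem_filter, Finset.mem_univ, true_and, mmTensor_finProdFinEquiv,
      Finset.mem_image, Prod.exists, Prod.mk.injEq, EmbeddingLike.apply_eq_iff_eq,
      ite_eq_left_iff, zero_ne_one, imp_false, not_not]
    constructor
    · rintro ⟨rfl, rfl, rfl⟩
      exact ⟨a, b, c, ⟨rfl, rfl⟩, ⟨rfl, rfl⟩, rfl, rfl⟩
    · rintro ⟨_, _, _, ⟨rfl, rfl⟩, ⟨rfl, rfl⟩, rfl, rfl⟩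
      exact ⟨rfl, rfl, rfl⟩
  rw [support_eq, Finset.card_image_of_injective _ entry_injective]
  simp [mul_assoc]

theorem rvec_finProdFinEquiv {I J : ℕ} (A : Matrix (Fin I) (Fin J) ℝ) (x : Fin I × Fin J) :
    rvec A (finProdFinEquiv x) = A x.1 x.2 :=
  congrArg₂ A (divNat_finProdFinEquiv x) (modNat_finProdFinEquiv x)

theorem rvec_single {I J : ℕ} (x : Fin I × Fin J) (c : ℝ) :
    rvec (single x.1 x.2 c) = Pi.single (finProdFinEquiv x) c := by
  ext a
  obtain ⟨y, rfl⟩ := finProdFinEquiv.surjective a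
  simp only [rvec_finProdFinEquiv, single_apply, Pi.single_apply, EmbeddingLike.apply_eq_iff_eq,
    Prod.ext_iff, eq_comm]

theorem mmTensor_eq_rvec_single_mul_single (x : Fin M × Fin K) (y : Fin K × Fin N)
    (k : Fin (M * N)) :
    mmTensor M K N (finProdFinEquiv x) (finProdFinEquiv y) k =
      rvec (single x.1 x.2 (1 : ℝ) * single y.1 y.2 (1 : ℝ)) k := by
  obtain ⟨z, rfl⟩ := finProdFinEquiv.surjective k
  rw [mmTensor_finProdFinEquiv, rvec_finProdFinEquiv]
  by_cases inner_eq : x.2 = y.1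
  · simp [inner_eq, single_apply, and_comm]
  · simp [inner_eq]

variable {ι : Type*} [Fintype ι]

/-- A bilinear algorithm for multiplying an `M × K` matrix by a `K × N` matrix. The columns of `U`
and `V` are the coefficients of the linear forms whose products, indexed by `ι`, the algorithm
computes; `W` recombines these products. The product of the two `ι`-indexed vectors is pointwise. -/
def IsBilinearMulAlgorithm (U : Matrix (Fin (M * K)) ι ℝ) (V : Matrix (Fin (K * N)) ι ℝ)
    (W : Matrix (Fin (M * N)) ι ℝ) : Prop :=
  ∀ (A : Matrix (Fin M) (Fin K) ℝ) (B : Matrix (Fin K) (Fin N) ℝ),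
    rvec (A * B) = W *ᵥ ((rvec A ᵥ* U) * (rvec B ᵥ* V))

theorem IsBilinearMulAlgorithm.mmTensor_eq_sum {U : Matrix (Fin (M * K)) ι ℝ}
    {V : Matrix (Fin (K * N)) ι ℝ} {W : Matrix (Fin (M * N)) ι ℝ}
    (h : IsBilinearMulAlgorithm U V W) (i : Fin (M * K)) (j : Fin (K * N)) (k : Fin (M * N)) :
    mmTensor M K N i j k = ∑ r, U i r * V j r * W k r := by
  obtain ⟨x, rfl⟩ := finProdFinEquiv.surjective i
  obtain ⟨y, rfl⟩ := finProdFinEquiv.surjective j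
  calc mmTensor M K N (finProdFinEquiv x) (finProdFinEquiv y) k
      = rvec (single x.1 x.2 (1 : ℝ) * single y.1 y.2 (1 : ℝ)) k :=
        mmTensor_eq_rvec_single_mul_single x y k
    _ = (W *ᵥ (U.row (finProdFinEquiv x) * V.row (finProdFinEquiv y))) k := by
        rw [h, rvec_single, rvec_single, single_one_vecMul, single_one_vecMul]
    _ = ∑ r, U (finProdFinEquiv x) r * V (finProdFinEquiv y) r * W k r :=
        Finset.sum_congr rfl fun _ _ => mul_comm _ _

end MatrixMultiplicationTensor

/-- The left factors of Strassen's seven products, as columns in the row-major entries of `A`. -/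
def strassenLeft : Matrix (Fin (2 * 2)) (Fin 7) ℝ :=
  !![1, 0, 1, 0, 1, -1,  0;
     0, 0, 0, 0, 1,  0,  1;
     0, 1, 0, 0, 0,  1,  0;
     1, 1, 0, 1, 0,  0, -1]

/-- The right factors of Strassen's seven products, as columns in the row-major entries of `B`. -/
def strassenRight : Matrix (Fin (2 * 2)) (Fin 7) ℝ :=
  !![1, 1,  0, -1, 0, 1, 0;
     0, 0,  1,  0, 0, 1, 0;
     0, 0,  0,  1, 0, 0, 1;
     1, 0, -1,  0, 1, 0, 1]

/-- The coefficients recovering the row-major entries of `A * B` from Strassen's seven products. -/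
def strassenOutput : Matrix (Fin (2 * 2)) (Fin 7) ℝ :=
  !![1,  0, 0, 1, -1, 0, 1;
     0,  0, 1, 0,  1, 0, 0;
     0,  1, 0, 1,  0, 0, 0;
     1, -1, 1, 0,  0, 1, 0]

theorem rvec_fin_two (A : Matrix (Fin 2) (Fin 2) ℝ) :
    rvec A = ![A 0 0, A 0 1, A 1 0, A 1 1] := by
  ext a
  fin_cases a <;> rfl

theorem rvec_vecMul_strassenLeft (A : Matrix (Fin 2) (Fin 2) ℝ) :
    rvec A ᵥ* strassenLeft =
      ![A 0 0 + A 1 1, A 1 0 + A 1 1, A 0 0, A 1 1, A 0 0 + A 0 1, A 1 0 - A 0 0,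
        A 0 1 - A 1 1] := by
  rw [rvec_fin_two]
  ext r
  fin_cases r <;> simp [strassenLeft, vecMul, dotProduct, Fin.sum_univ_four] <;> ring

theorem rvec_vecMul_strassenRight (B : Matrix (Fin 2) (Fin 2) ℝ) :
    rvec B ᵥ* strassenRight =
      ![B 0 0 + B 1 1, B 0 0, B 0 1 - B 1 1, B 1 0 - B 0 0, B 1 1, B 0 0 + B 0 1,
        B 1 0 + B 1 1] := by
  rw [rvec_fin_two]
  ext r
  fin_cases r <;> simp [strassenRight, vecMul, dotProduct, Fin.sum_univ_four] <;> ring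

theorem strassenOutput_mulVec (m : Fin 7 → ℝ) :
    strassenOutput *ᵥ m =
      ![m 0 + m 3 - m 4 + m 6, m 2 + m 4, m 1 + m 3, m 0 - m 1 + m 2 + m 5] := by
  ext k
  fin_cases k <;> simp [strassenOutput, mulVec, dotProduct, Fin.sum_univ_seven] <;> ring

theorem isBilinearMulAlgorithm_strassen :
    IsBilinearMulAlgorithm strassenLeft strassenRight strassenOutput := by
  intro A B
  rw [rvec_vecMul_strassenLeft, rvec_vecMul_strassenRight, strassenOutput_mulVec, rvec_fin_two]
  ext k
  fin_cases k <;> simp [mul_apply, Fin.sum_univ_two] <;> ring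

open Classical in
/-- Although the `⟨2,2,2⟩` matrix multiplication tensor has 8 nonzero entries,
its rank is at most 7: it admits a rank-7 decomposition. -/
theorem mmTensor222_rank_le_seven :
    (Finset.univ.filter fun p : Fin (2 * 2) × Fin (2 * 2) × Fin (2 * 2) =>
        mmTensor 2 2 2 p.1 p.2.1 p.2.2 = 1).card = 8 ∧
    ∃ (U : Matrix (Fin (2 * 2)) (Fin 7) ℝ) (V : Matrix (Fin (2 * 2)) (Fin 7) ℝ)
      (W : Matrix (Fin (2 * 2)) (Fin 7) ℝ),
      ∀ (i : Fin (2 * 2)) (j : Fin (2 * 2)) (k : Fin (2 * 2)),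
        mmTensor 2 2 2 i j k = ∑ r : Fin 7, U i r * V j r * W k r := by
  exact ⟨card_filter_mmTensor_eq_one 2 2 2, strassenLeft, strassenRight, strassenOutput,
    isBilinearMulAlgorithm_strassen.mmTensor_eq_sum⟩
end
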